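/- Let n, k, l ≥ 1, and let τ = (τ₀,…,τ_{k−1}) : (ℝⁿ)ᵏ × ℝˡ → (ℝⁿ)ᵏ be k times continuously differentiable, with partial Jacobians J_z(z,s) (with respect to z) and J_s(z,s) (with respect to s). Let G₁,…,G_{l+1} : ℝˡ → ℝˡ, and suppose that for every s ∈ ℝˡ the l×l matrix with columns G₂(s)−G₁(s),…,G_{l+1}(s)−G₁(s) is invertible. Suppose that for every i ∈ {1,…,l+1} and all z ∈ (ℝⁿ)ᵏ, s ∈ ℝˡ, u ∈ ℝⁿ: (τ₁(z,s),…,τ_{k−1}(z,s), F̂(τ(z,s)) + B̂(τ(z,s))u) = J_z(z,s)·(z₁,…,z_{k−1}, F(z)+B(z)u) + J_s(z,s)·G_i(s). Then J_s(z,s) = 0 for all (z,s), so τ(z,s) = φ(z) for a function φ : (ℝⁿ)ᵏ → (ℝⁿ)ᵏ; moreover the Jacobian of φ at every z is block lower triangular with every diagonal block equal to B̂(φ(z))B(z)⁻¹ (hence invertible everywhere), and the first block of φ depends only on z₀ through a componentwise strictly increasing map. -/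

import Mathlib

/-!
Subtracting the consistency identities of two environments leaves `J_s (G_i - G_0) = 0`; these
differences span `ℝˡ`, so `J_s = 0` and `τ (z, s) = φ z`. The remaining identity says that `Dφ z`
maps `(z₁, …, z_{k-1}, F z + v)` to `(φ₁ z, …, φ_{k-1} z, F̂ (φ z) + M z v)` for every `v`, where
`M = B̂(φ) B⁻¹`. Comparing two values of `v` gives the last column of blocks of the Jacobian:
zero above the diagonal, and `M` on it.

The other columns follow from `partial_succ`: if `φᵢ` does not depend on `z_{j+1}`, then neither
does `Dφᵢ`, so `φ_{i+1} z = Dφᵢ z (z₁, …, z_{k-1}, ⋆)` is affine in `z_{j+1}` with slope `∂ⱼφᵢ z`,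
that is, `∂_{j+1}φ_{i+1} = ∂ⱼφᵢ`. Descending induction on the column index gives the block
triangular shape and propagates `M` along the diagonal. Only first derivatives are used.
-/

open Matrix

noncomputable section

/-- `shiftVec f last` is the vector `(f₁, …, f_{k-1}, last)` obtained from
`f = (f₀, …, f_{k-1})` by shifting the blocks and putting `last` in the last block. -/
def shiftVec {n k : ℕ} (f : Fin k → Fin n → ℝ) (last : Fin n → ℝ) : Fin k → Fin n → ℝ :=
  fun i => if h : (i : ℕ) + 1 < k then f ⟨(i : ℕ) + 1, h⟩ else last

/-- The `(i,j)`-th `n × n` block of the Jacobian of `φ` at `z`. -/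
def jacBlock {n k : ℕ} (φ : (Fin k → Fin n → ℝ) → Fin k → Fin n → ℝ)
    (z : Fin k → Fin n → ℝ) (i j : Fin k) : Matrix (Fin n) (Fin n) ℝ :=
  Matrix.of fun a b => fderiv ℝ φ z (Pi.single j (Pi.single b 1)) i a

/-- A differentiable map whose derivative along the fixed direction `w` vanishes everywhere is
invariant under translation by `w`. -/
lemma add_eq_of_fderiv_apply_eq_zero {E V : Type*} [NormedAddCommGroup E] [NormedSpace ℝ E]
    [NormedAddCommGroup V] [NormedSpace ℝ V] {f : E → V} (hf : Differentiable ℝ f) {w : E}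
    (h : ∀ x, fderiv ℝ f x w = 0) (x : E) : f (x + w) = f x := by
  have hd : ∀ t : ℝ, HasDerivAt (fun t : ℝ => f (x + t • w)) 0 t := by
    intro t
    have h1 : HasDerivAt (fun t : ℝ => x + t • w) w t := by
      simpa using ((hasDerivAt_id t).smul_const w).const_add x
    have h2 := (hf (x + t • w)).hasFDerivAt.comp_hasDerivAt t h1
    rwa [h] at h2
  have := is_const_of_deriv_eq_zero (fun t => (hd t).differentiableAt) (fun t => (hd t).deriv) 1 0
  simpa using this

lemma fderiv_component {E ι V : Type*} [NormedAddCommGroup E] [NormedSpace ℝ E] [Fintype ι]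
    [NormedAddCommGroup V] [NormedSpace ℝ V] {f : E → ι → V} (hf : Differentiable ℝ f)
    (i : ι) (x w : E) : fderiv ℝ (fun y => f y i) x w = fderiv ℝ f x w i := by
  rw [(hasFDerivAt_pi'.1 (hf x).hasFDerivAt i).fderiv]
  rfl

lemma shiftVec_add_last {n k : ℕ} (hk : 0 < k) (z : Fin k → Fin n → ℝ) (c v : Fin n → ℝ) :
    shiftVec z (c + v) = shiftVec z c + Pi.single ⟨k - 1, by omega⟩ v := by
  funext i
  by_cases h : (i : ℕ) + 1 < k
  · have hne : i ≠ ⟨k - 1, by omega⟩ := by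
      intro e
      have := congrArg Fin.val e
      simp at this
      omega
    simp [shiftVec, h, hne]
  · have he : i = ⟨k - 1, by omega⟩ := by
      apply Fin.ext
      have := i.2
      simp
      omega
    rw [← he]
    simp [shiftVec, h]

lemma shiftVec_add_single {n k : ℕ} (z : Fin k → Fin n → ℝ) (c v : Fin n → ℝ) (j : ℕ)
    (hj : j + 1 < k) :
    shiftVec (z + Pi.single ⟨j + 1, hj⟩ v) c
      = shiftVec z c + Pi.single ⟨j, by omega⟩ v := by
  funext i
  by_cases h : (i : ℕ) + 1 < k
  · by_cases e : (i : ℕ) = j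
    · subst e
      simp [shiftVec, h]
    · have h1 : (⟨(i : ℕ) + 1, h⟩ : Fin k) ≠ ⟨j + 1, hj⟩ := by simpa using e
      have h2 : i ≠ ⟨j, by omega⟩ := fun q => e (congrArg Fin.val q)
      simp [shiftVec, h, h1, h2]
  · have h2 : i ≠ ⟨j, by omega⟩ := by
      intro q
      have := congrArg Fin.val q
      simp at this
      omega
    simp [shiftVec, h, h2]

section Triangular

variable {n k : ℕ} {φ : (Fin k → Fin n → ℝ) → Fin k → Fin n → ℝ}
  {F Fh : (Fin k → Fin n → ℝ) → Fin n → ℝ} {M : (Fin k → Fin n → ℝ) → Matrix (Fin n) (Fin n) ℝ}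

/-- The last block column of the Jacobian of `φ`. -/
lemma partial_last (hk : 0 < k)
    (H : ∀ z v, fderiv ℝ φ z (shiftVec z (F z + v)) = shiftVec (φ z) (Fh z + M z *ᵥ v))
    (z : Fin k → Fin n → ℝ) (v : Fin n → ℝ) :
    fderiv ℝ φ z (Pi.single ⟨k - 1, by omega⟩ v) = Pi.single ⟨k - 1, by omega⟩ (M z *ᵥ v) := by
  have h0 := H z 0
  have h1 := H z v
  rw [shiftVec_add_last hk, shiftVec_add_last hk, map_add] at h1
  simp only [mulVec_zero, add_zero] at h0
  rw [h0] at h1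
  exact add_left_cancel h1

/-- If `φᵢ` does not depend on `z_{j+1}`, then `∂_{j+1} φ_{i+1} = ∂ⱼ φᵢ`. -/
lemma partial_succ (hφ : Differentiable ℝ φ)
    (H : ∀ z v, fderiv ℝ φ z (shiftVec z (F z + v)) = shiftVec (φ z) (Fh z + M z *ᵥ v))
    (i j : ℕ) (hi : i + 1 < k) (hj : j + 1 < k)
    (h0 : ∀ z v, fderiv ℝ φ z (Pi.single ⟨j + 1, hj⟩ v) ⟨i, by omega⟩ = 0)
    (z : Fin k → Fin n → ℝ) (v : Fin n → ℝ) :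
    fderiv ℝ φ z (Pi.single ⟨j + 1, hj⟩ v) ⟨i + 1, hi⟩
      = fderiv ℝ φ z (Pi.single ⟨j, by omega⟩ v) ⟨i, by omega⟩ := by
  have hcomp : ∀ (m : Fin k) (x w : Fin k → Fin n → ℝ),
      fderiv ℝ (fun y => φ y m) x w = fderiv ℝ φ x w m := fderiv_component hφ
  have hdi : ∀ m : Fin k, Differentiable ℝ (fun y => φ y m) := fun m =>
    differentiable_pi.1 hφ m
  -- Invariance of `φᵢ` under translations in block `j + 1` passes to its derivative.
  have hD : ∀ (x w : Fin k → Fin n → ℝ) (v : Fin n → ℝ),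
      fderiv ℝ φ (x + Pi.single ⟨j + 1, hj⟩ v) w ⟨i, by omega⟩
        = fderiv ℝ φ x w ⟨i, by omega⟩ := by
    intro x w v
    rw [← hcomp, ← hcomp, ← fderiv_comp_add_right]
    congr 2
    funext y
    exact add_eq_of_fderiv_apply_eq_zero (f := fun y => φ y ⟨i, by omega⟩) (hdi _)
      (fun y => by rw [hcomp, h0]) y
  -- The equation for `φ_{i+1}` holds with an arbitrary last entry.
  have hS : ∀ (x : Fin k → Fin n → ℝ) (c : Fin n → ℝ),
      φ x ⟨i + 1, hi⟩ = fderiv ℝ φ x (shiftVec x c) ⟨i, by omega⟩ := by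
    intro x c
    have := congrFun (H x (c - F x)) ⟨i, by omega⟩
    rw [add_sub_cancel] at this
    rw [this]
    simp [shiftVec, hi]
  have hA : ∀ t : ℝ, φ (z + t • (Pi.single ⟨j + 1, hj⟩ v : Fin k → Fin n → ℝ)) ⟨i + 1, hi⟩
      = φ z ⟨i + 1, hi⟩ + t • fderiv ℝ φ z (Pi.single ⟨j, by omega⟩ v) ⟨i, by omega⟩ := by
    intro t
    rw [hS _ 0, hS z 0, ← Pi.single_smul, hD, shiftVec_add_single, map_add, Pi.single_smul,
      map_smul]
    rfl
  have h1 : HasDerivAt (fun t : ℝ => z + t • (Pi.single ⟨j + 1, hj⟩ v : Fin k → Fin n → ℝ))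
      (Pi.single ⟨j + 1, hj⟩ v) 0 := by
    simpa using ((hasDerivAt_id (0 : ℝ)).smul_const
      (Pi.single ⟨j + 1, hj⟩ v : Fin k → Fin n → ℝ)).const_add z
  have h2 := ((hdi ⟨i + 1, hi⟩)
    (z + (0 : ℝ) • (Pi.single ⟨j + 1, hj⟩ v : Fin k → Fin n → ℝ))).hasFDerivAt.comp_hasDerivAt 0 h1
  have h3 : HasDerivAt ((fun y => φ y ⟨i + 1, hi⟩) ∘
      fun t : ℝ => z + t • (Pi.single ⟨j + 1, hj⟩ v : Fin k → Fin n → ℝ))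
      (fderiv ℝ φ z (Pi.single ⟨j, by omega⟩ v) ⟨i, by omega⟩) 0 := by
    have : ((fun y => φ y ⟨i + 1, hi⟩) ∘
        fun t : ℝ => z + t • (Pi.single ⟨j + 1, hj⟩ v : Fin k → Fin n → ℝ))
        = fun t : ℝ => φ z ⟨i + 1, hi⟩
            + t • fderiv ℝ φ z (Pi.single ⟨j, by omega⟩ v) ⟨i, by omega⟩ := funext hA
    rw [this]
    simpa using ((hasDerivAt_id (0 : ℝ)).smul_const
      (fderiv ℝ φ z (Pi.single ⟨j, by omega⟩ v) ⟨i, by omega⟩)).const_add (φ z ⟨i + 1, hi⟩)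
  have h4 := h2.unique h3
  rw [hcomp] at h4
  simpa using h4

/-- Descending induction on the block column, parametrised by its distance `d` from the last. -/
lemma partial_column (hφ : Differentiable ℝ φ)
    (H : ∀ z v, fderiv ℝ φ z (shiftVec z (F z + v)) = shiftVec (φ z) (Fh z + M z *ᵥ v))
    (d : ℕ) : ∀ (j : ℕ) (hj : j < k), j + d + 1 = k →
      (∀ (i : ℕ) (hi : i < j) z v,
        fderiv ℝ φ z (Pi.single ⟨j, hj⟩ v) ⟨i, by omega⟩ = 0) ∧
      ∀ z v, fderiv ℝ φ z (Pi.single ⟨j, hj⟩ v) ⟨j, hj⟩ = M z *ᵥ v := by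
  induction d with
  | zero =>
    intro j hj hd
    obtain rfl : j = k - 1 := by omega
    refine ⟨fun i hi z v => ?_, fun z v => ?_⟩
    · rw [partial_last (by omega) H, Pi.single_eq_of_ne]
      simp
      omega
    · rw [partial_last (by omega) H, Pi.single_eq_same]
  | succ d ih =>
    intro j hj hd
    obtain ⟨ih1, ih2⟩ := ih (j + 1) (by omega) (by omega)
    refine ⟨fun i hi z v => ?_, fun z v => ?_⟩
    · rw [← partial_succ hφ H i j (by omega) (by omega) (ih1 i (by omega))]
      exact ih1 (i + 1) (by omega) z v
    · rw [← partial_succ hφ H j j (by omega) (by omega) (ih1 j (by omega))]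
      exact ih2 z v

lemma partial_upper (hφ : Differentiable ℝ φ)
    (H : ∀ z v, fderiv ℝ φ z (shiftVec z (F z + v)) = shiftVec (φ z) (Fh z + M z *ᵥ v))
    (i j : Fin k) (hij : i < j) (z : Fin k → Fin n → ℝ) (v : Fin n → ℝ) :
    fderiv ℝ φ z (Pi.single j v) i = 0 :=
  (partial_column hφ H (k - 1 - j) j j.2 (by omega)).1 i hij z v

lemma partial_diag (hφ : Differentiable ℝ φ)
    (H : ∀ z v, fderiv ℝ φ z (shiftVec z (F z + v)) = shiftVec (φ z) (Fh z + M z *ᵥ v))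
    (i : Fin k) (z : Fin k → Fin n → ℝ) (v : Fin n → ℝ) :
    fderiv ℝ φ z (Pi.single i v) i = M z *ᵥ v :=
  (partial_column hφ H (k - 1 - i) i i.2 (by omega)).2 z v

lemma fderiv_apply_eq_sum (z w : Fin k → Fin n → ℝ) (i : Fin k) :
    fderiv ℝ φ z w i = ∑ j, fderiv ℝ φ z (Pi.single j (w j)) i := by
  conv_lhs => rw [← Finset.univ_sum_single w]
  rw [map_sum, Finset.sum_apply]

/-- Forward substitution: a block lower triangular derivative with injective diagonal blocks is
injective, hence bijective. -/
lemma fderiv_bijective (hφ : Differentiable ℝ φ)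
    (H : ∀ z v, fderiv ℝ φ z (shiftVec z (F z + v)) = shiftVec (φ z) (Fh z + M z *ᵥ v))
    (z : Fin k → Fin n → ℝ) (hM : ∀ v, M z *ᵥ v = 0 → v = 0) :
    Function.Bijective (fderiv ℝ φ z) := by
  have hinj : Function.Injective (fderiv ℝ φ z) := by
    rw [injective_iff_map_eq_zero]
    intro w hw
    have key : ∀ (m : ℕ) (hm : m < k), w ⟨m, hm⟩ = 0 := by
      intro m
      induction m using Nat.strong_induction_on with
      | _ m ih =>
        intro hm
        apply hM
        have h1 : fderiv ℝ φ z w ⟨m, hm⟩ = 0 := by rw [hw]; rfl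
        rw [fderiv_apply_eq_sum, Finset.sum_eq_single ⟨m, hm⟩, partial_diag hφ H] at h1
        · exact h1
        · intro j _ hj
          rcases lt_or_gt_of_ne hj with h | h
          · rw [ih j h j.2]
            simp
          · exact partial_upper hφ H _ _ h z _
        · simp
    funext i
    exact key i i.2
  have : Function.Injective (fderiv ℝ φ z : (Fin k → Fin n → ℝ) →ₗ[ℝ] (Fin k → Fin n → ℝ)) := hinj
  exact ⟨hinj, LinearMap.injective_iff_surjective.1 this⟩

/-- The first block of `φ` acts componentwise through strictly increasing functions of `z₀`. -/
lemma first_block (hk : 0 < k) (hφ : Differentiable ℝ φ)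
    (H : ∀ z v, fderiv ℝ φ z (shiftVec z (F z + v)) = shiftVec (φ z) (Fh z + M z *ᵥ v))
    (m : (Fin k → Fin n → ℝ) → Fin n → ℝ) (hm : ∀ z a, 0 < m z a)
    (hM : ∀ z v a, (M z *ᵥ v) a = m z a * v a) :
    ∃ g : Fin n → ℝ → ℝ, (∀ a, StrictMono (g a)) ∧
      ∀ (z : Fin k → Fin n → ℝ) (a : Fin n), φ z ⟨0, hk⟩ a = g a (z ⟨0, hk⟩ a) := by
  have hda : ∀ a, Differentiable ℝ (fun y => φ y ⟨0, hk⟩ a) := fun a =>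
    differentiable_pi.1 (differentiable_pi.1 hφ ⟨0, hk⟩) a
  have hder : ∀ (a : Fin n) (z w : Fin k → Fin n → ℝ),
      fderiv ℝ (fun y => φ y ⟨0, hk⟩ a) z w = m z a * w ⟨0, hk⟩ a := by
    intro a z w
    have h1 : fderiv ℝ (fun y => φ y ⟨0, hk⟩ a) z w = fderiv ℝ φ z w ⟨0, hk⟩ a := by
      rw [fderiv_component (f := fun y => φ y ⟨0, hk⟩) (differentiable_pi.1 hφ ⟨0, hk⟩),
        fderiv_component hφ]
    rw [h1, fderiv_apply_eq_sum, Finset.sum_eq_single ⟨0, hk⟩, partial_diag hφ H, hM]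
    · intro j _ hj
      refine partial_upper hφ H _ _ ?_ z _
      exact lt_of_le_of_ne (Nat.zero_le _) (Ne.symm hj)
    · simp
  refine ⟨fun a t => φ (Pi.single ⟨0, hk⟩ (Pi.single a t)) ⟨0, hk⟩ a, fun a => ?_, fun z a => ?_⟩
  · apply strictMono_of_deriv_pos
    intro t
    have h1 : HasDerivAt (fun t : ℝ => t • (Pi.single ⟨0, hk⟩ (Pi.single a 1) :
        Fin k → Fin n → ℝ)) (Pi.single ⟨0, hk⟩ (Pi.single a 1)) t := by
      simpa using (hasDerivAt_id t).smul_const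
        (Pi.single ⟨0, hk⟩ (Pi.single a 1) : Fin k → Fin n → ℝ)
    have h2 := (hda a (t • Pi.single ⟨0, hk⟩ (Pi.single a 1))).hasFDerivAt.comp_hasDerivAt t h1
    have h3 : (fun t : ℝ => φ (Pi.single ⟨0, hk⟩ (Pi.single a t)) ⟨0, hk⟩ a)
        = (fun y => φ y ⟨0, hk⟩ a) ∘
          fun t : ℝ => t • (Pi.single ⟨0, hk⟩ (Pi.single a 1) : Fin k → Fin n → ℝ) := by
      funext t
      simp [← Pi.single_smul]
    beta_reduce
    rw [h3, h2.deriv, hder]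
    simpa using hm _ a
  · have := add_eq_of_fderiv_apply_eq_zero (hda a)
      (w := z - Pi.single ⟨0, hk⟩ (Pi.single a (z ⟨0, hk⟩ a)))
      (fun x => by rw [hder]; simp) (Pi.single ⟨0, hk⟩ (Pi.single a (z ⟨0, hk⟩ a)))
    rw [add_sub_cancel] at this
    exact this

end Triangular

theorem stmt4 {n k l : ℕ} (hn : 1 ≤ n) (hk : 0 < k) (hl : 1 ≤ l)
    (F Fhat : (Fin k → Fin n → ℝ) → Fin n → ℝ)
    (B Bhat : (Fin k → Fin n → ℝ) → Matrix (Fin n) (Fin n) ℝ)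
    (bh bhath : ℝ) (hbh : 0 < bh) (hbhath : 0 < bhath)
    (hBdiag : ∀ z, (B z).IsDiag) (hBpos : ∀ z a, bh ≤ B z a a)
    (hBhatdiag : ∀ zh, (Bhat zh).IsDiag) (hBhatpos : ∀ zh a, bhath ≤ Bhat zh a a)
    (τ : (Fin k → Fin n → ℝ) × (Fin l → ℝ) → Fin k → Fin n → ℝ)
    (hτ : ContDiff ℝ k τ)
    -- the `l+1` environmental dynamics
    (G : Fin (l + 1) → (Fin l → ℝ) → Fin l → ℝ)
    -- for every s, the l × l matrix with columns G₂(s) − G₁(s), …, G_{l+1}(s) − G₁(s)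
    -- is invertible
    (hG : ∀ s : Fin l → ℝ,
      IsUnit (Matrix.of fun (a j : Fin l) => G j.succ s a - G 0 s a))
    -- the consistency identity in every training environment:
    -- (τ₁, …, τ_{k-1}, Fhat(τ) + Bhat(τ)u) = J_z(z,s)·(z₁, …, z_{k-1}, F(z)+B(z)u) + J_s(z,s)·G_i(s)
    (hcons : ∀ (i : Fin (l + 1)) (z : Fin k → Fin n → ℝ) (s : Fin l → ℝ) (u : Fin n → ℝ),
      shiftVec (τ (z, s)) (Fhat (τ (z, s)) + (Bhat (τ (z, s))).mulVec u)
        = fderiv ℝ τ (z, s) (shiftVec z (F z + (B z).mulVec u), G i s)) :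
    -- J_s(z,s) = 0 everywhere
    (∀ (z : Fin k → Fin n → ℝ) (s w : Fin l → ℝ), fderiv ℝ τ (z, s) (0, w) = 0)
    ∧ ∃ φ : (Fin k → Fin n → ℝ) → Fin k → Fin n → ℝ,
        (∀ (z : Fin k → Fin n → ℝ) (s : Fin l → ℝ), τ (z, s) = φ z)
        ∧ (∀ z : Fin k → Fin n → ℝ,
            (∀ i j : Fin k, i < j → jacBlock φ z i j = 0)
            ∧ (∀ i : Fin k, jacBlock φ z i i = Bhat (φ z) * (B z)⁻¹)
            ∧ Function.Bijective (fderiv ℝ φ z))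
        ∧ ∃ g : Fin n → ℝ → ℝ,
            (∀ a, StrictMono (g a))
            ∧ ∀ (z : Fin k → Fin n → ℝ) (a : Fin n), φ z ⟨0, hk⟩ a = g a (z ⟨0, hk⟩ a) := by
  have hτd : Differentiable ℝ τ := hτ.differentiable (by exact_mod_cast hk.ne')
  have hJs : ∀ (z : Fin k → Fin n → ℝ) (s w : Fin l → ℝ), fderiv ℝ τ (z, s) (0, w) = 0 := by
    intro z s w
    have hd : ∀ j : Fin l, fderiv ℝ τ (z, s) (0, G j.succ s - G 0 s) = 0 := by
      intro j
      have h := (hcons j.succ z s 0).symm.trans (hcons 0 z s 0)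
      rw [← sub_eq_zero, ← map_sub] at h
      simpa using h
    obtain ⟨c, hc⟩ := (Matrix.mulVec_surjective_iff_isUnit.2 (hG s)) w
    have hw : w = ∑ j, c j • (G j.succ s - G 0 s) := by
      rw [← hc]
      funext a
      simp [Matrix.mulVec, dotProduct, Finset.sum_apply, mul_comm]
    have h2 : ((0, w) : (Fin k → Fin n → ℝ) × (Fin l → ℝ))
        = ∑ j, c j • ((0, G j.succ s - G 0 s) : (Fin k → Fin n → ℝ) × (Fin l → ℝ)) := by
      refine Prod.ext ?_ ?_
      · simp [Prod.fst_sum]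
      · simp only [Prod.snd_sum, Prod.smul_snd]
        exact hw
    rw [h2, map_sum]
    exact Finset.sum_eq_zero fun j _ => by rw [map_smul, hd, smul_zero]
  have hφτ : ∀ (z : Fin k → Fin n → ℝ) (s : Fin l → ℝ), τ (z, s) = τ (z, 0) := by
    intro z s
    have := add_eq_of_fderiv_apply_eq_zero hτd (w := ((0 : Fin k → Fin n → ℝ), s))
      (fun x => hJs x.1 x.2 s) (z, 0)
    simpa using this
  set φ : (Fin k → Fin n → ℝ) → Fin k → Fin n → ℝ := fun z => τ (z, 0) with hφdef
  have hφ : Differentiable ℝ φ := hτd.comp (differentiable_id.prodMk (differentiable_const _))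
  have hφD : ∀ z w, fderiv ℝ φ z w = fderiv ℝ τ (z, 0) (w, 0) := by
    intro z w
    have h1 : HasFDerivAt (fun z : Fin k → Fin n → ℝ => (z, (0 : Fin l → ℝ)))
        ((ContinuousLinearMap.id ℝ _).prod 0) z :=
      (hasFDerivAt_id z).prodMk (hasFDerivAt_const _ _)
    have h2 := ((hτd (z, 0)).hasFDerivAt.comp z h1).fderiv
    change fderiv ℝ (τ ∘ fun z => (z, 0)) z w = _
    rw [h2]
    simp
  have hBne : ∀ z a, B z a a ≠ 0 := fun z a => (hbh.trans_le (hBpos z a)).ne'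
  have hBd : ∀ z, B z = Matrix.diagonal fun a => B z a a := fun z =>
    ((hBdiag z).diagonal_diag).symm
  have hBu : ∀ z, IsUnit (B z).det := by
    intro z
    rw [hBd z, Matrix.det_diagonal, isUnit_iff_ne_zero]
    exact Finset.prod_ne_zero_iff.2 fun a _ => by simpa using hBne z a
  have hBinv : ∀ z, (B z)⁻¹ = Matrix.diagonal fun a => (B z a a)⁻¹ := by
    intro z
    apply Matrix.inv_eq_right_inv
    conv_lhs => rw [hBd z]
    rw [Matrix.diagonal_mul_diagonal]
    simp [hBne]
  have H : ∀ z v, fderiv ℝ φ z (shiftVec z (F z + v))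
      = shiftVec (φ z) (Fhat (φ z) + (Bhat (φ z) * (B z)⁻¹) *ᵥ v) := by
    intro z v
    have h := hcons 0 z 0 ((B z)⁻¹ *ᵥ v)
    rw [Matrix.mulVec_mulVec, Matrix.mulVec_mulVec, Matrix.mul_nonsing_inv _ (hBu z),
      Matrix.one_mulVec] at h
    have h3 : ((shiftVec z (F z + v), G 0 0) : (Fin k → Fin n → ℝ) × (Fin l → ℝ))
        = (shiftVec z (F z + v), 0) + (0, G 0 0) := by simp
    rw [h3, map_add, hJs, add_zero] at h
    rw [hφD]
    exact h.symm
  have hMv : ∀ z v a, ((Bhat (φ z) * (B z)⁻¹) *ᵥ v) a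
      = (Bhat (φ z) a a * (B z a a)⁻¹) * v a := by
    intro z v a
    have e : Bhat (φ z) = Matrix.diagonal fun a => Bhat (φ z) a a :=
      ((hBhatdiag (φ z)).diagonal_diag).symm
    conv_lhs => rw [hBinv, e, Matrix.diagonal_mul_diagonal, Matrix.mulVec_diagonal]
  have hpos : ∀ z a, 0 < Bhat (φ z) a a * (B z a a)⁻¹ := fun z a =>
    mul_pos (hbhath.trans_le (hBhatpos _ a)) (inv_pos.2 (hbh.trans_le (hBpos z a)))
  refine ⟨hJs, φ, hφτ, fun z => ⟨fun i j hij => ?_, fun i => ?_, ?_⟩, ?_⟩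
  · ext a b
    simp [jacBlock, partial_upper hφ H i j hij]
  · ext a b
    simp [jacBlock, partial_diag (M := fun z => Bhat (φ z) * (B z)⁻¹) hφ H i]
  · refine fderiv_bijective (M := fun z => Bhat (φ z) * (B z)⁻¹) hφ H z fun v hv => ?_
    funext a
    have := congrFun hv a
    rw [hMv] at this
    exact (mul_eq_zero.1 this).resolve_left (hpos z a).ne'
  · exact first_block (M := fun z => Bhat (φ z) * (B z)⁻¹) hk hφ H _ hpos hMv
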